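/- Let X be a strictly stable random variable with parameters (ν, θ, τ). Then E[(log|X|)³] = τ³ + 3τ·DV + 2ζ(3)(ν^{3/2} − 1). -/

import Mathlib

open MeasureTheory ProbabilityTheory

/-- The real value of the Riemann zeta function at a real argument. -/
noncomputable def zetaR (s : ℝ) : ℝ := (riemannZeta (s : ℂ)).re

/-- A real random variable `X` is strictly stable with parameters `(ν, θ, τ)` if
`ν ≥ 1/4`, `|θ| ≤ min 1 (2√ν − 1)`, `P(X = 0) = 0`, `log |X|` has finite absolute
moments of every order, and the characteristic function of `X` is
`E[exp(i k X)] = exp(−exp(ν^{−1/2}(log|k| + τ − i(π/2)θ sign k) + C(ν^{−1/2} − 1)))`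
for all real `k ≠ 0`, where `C` is the Euler–Mascheroni constant. -/
def IsStrictlyStable {Ω : Type*} [MeasureSpace Ω] (X : Ω → ℝ) (ν θ τ : ℝ) : Prop :=
  Measurable X ∧ (1/4 : ℝ) ≤ ν ∧ |θ| ≤ min 1 (2 * Real.sqrt ν - 1) ∧
  (ℙ : Measure Ω) {ω | X ω = 0} = 0 ∧
  (∀ p : ℕ, Integrable (fun ω => (abs (Real.log (abs (X ω)))) ^ p)) ∧
  ∀ k : ℝ, k ≠ 0 →
    (∫ ω, Complex.exp (Complex.I * (k : ℂ) * (X ω : ℂ))) =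
      Complex.exp (-Complex.exp
        (((ν ^ (-(1/2) : ℝ) : ℝ) : ℂ) *
            (((Real.log |k| : ℝ) : ℂ) + (τ : ℂ) -
              Complex.I * ((Real.pi / 2 : ℝ) : ℂ) * (θ : ℂ) * ((Real.sign k : ℝ) : ℂ)) +
          ((Real.eulerMascheroniConstant : ℝ) : ℂ) * (((ν ^ (-(1/2) : ℝ) : ℝ) : ℂ) - 1)))

lemma aux_gamma_complex {a : ℝ} (ha : 0 < a) {z : ℂ} (hz : 0 < z.re) :
    ∫ t in Set.Ioi (0:ℝ), ((t ^ (a - 1) : ℝ) : ℂ) * Complex.exp (-(z * t)) =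
      (Real.Gamma a : ℂ) * z ^ (-(a : ℂ)) := by
  set m : Measure ℝ := (volume.restrict (Set.Ioi (0:ℝ))).withDensity
    (fun t => ENNReal.ofReal (t ^ (a-1))) with hm
  have hmeas : Measurable (fun t : ℝ => ENNReal.ofReal (t ^ (a-1))) := by fun_prop
  have hfin : ∀ᵐ t ∂(volume.restrict (Set.Ioi (0:ℝ))), ENNReal.ofReal (t ^ (a-1)) < ⊤ := by
    filter_upwards with t using ENNReal.ofReal_lt_top
  have key : ∀ y : ℂ, complexMGF id m y =
      ∫ t in Set.Ioi (0:ℝ), ((t ^ (a - 1) : ℝ) : ℂ) * Complex.exp (y * t) := by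
    intro y
    rw [complexMGF, hm, integral_withDensity_eq_integral_toReal_smul hmeas hfin]
    refine setIntegral_congr_fun measurableSet_Ioi (fun t ht => ?_)
    have : 0 ≤ t ^ (a-1) := Real.rpow_nonneg (le_of_lt ht) _
    simp [ENNReal.toReal_ofReal this]
  have hset : Set.Iio (0:ℝ) ⊆ integrableExpSet id m := by
    intro y hy
    simp only [integrableExpSet, Set.mem_ofPred_eq, id]
    rw [hm, integrable_withDensity_iff_integrable_smul' hmeas hfin]
    have := (integrableOn_rpow_mul_exp_neg_mul_rpow (p := 1) (s := a - 1) (b := -y)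
      (by linarith) one_pos (by simpa using hy))
    refine Integrable.congr this ?_
    filter_upwards [ae_restrict_mem measurableSet_Ioi] with t ht
    have : 0 ≤ t ^ (a-1) := Real.rpow_nonneg (le_of_lt ht) _
    simp [ENNReal.toReal_ofReal this]
  have hint : Set.Iio (0:ℝ) ⊆ interior (integrableExpSet id m) :=
    interior_maximal hset isOpen_Iio
  have h1 : AnalyticOnNhd ℂ (complexMGF id m) {y : ℂ | y.re < 0} :=
    analyticOnNhd_complexMGF.mono (fun y hy => hint hy)
  have hopen : IsOpen {y : ℂ | y.re < 0} := isOpen_lt Complex.continuous_re continuous_const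
  have h2 : AnalyticOnNhd ℂ (fun y : ℂ => (Real.Gamma a : ℂ) * (-y) ^ (-(a : ℂ)))
      {y : ℂ | y.re < 0} := by
    apply DifferentiableOn.analyticOnNhd _ hopen
    intro y hy
    apply DifferentiableAt.differentiableWithinAt
    apply DifferentiableAt.const_mul
    apply DifferentiableAt.cpow (by fun_prop) (by fun_prop)
    left
    simpa using hy
  have hconv : IsPreconnected {y : ℂ | y.re < 0} :=
    (convex_halfSpace_re_lt 0).isPreconnected
  have hreal : ∀ x : ℝ, x < 0 → complexMGF id m (x : ℂ) =
      (Real.Gamma a : ℂ) * (-(x:ℂ)) ^ (-(a : ℂ)) := by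
    intro x hx
    rw [key]
    have := Complex.integral_cpow_mul_exp_neg_mul_Ioi (a := a) (r := -x) (by simpa using ha)
      (by linarith)
    rw [Complex.Gamma_ofReal] at this
    rw [Complex.cpow_neg]
    have e : (1 / ((-x : ℝ) : ℂ)) ^ (a:ℂ) = ((-(x:ℂ)) ^ (a:ℂ))⁻¹ := by
      rw [one_div, Complex.inv_cpow]
      · push_cast; rfl
      · rw [Complex.arg_ofReal_of_nonneg (by linarith)]; exact Real.pi_pos.ne
    rw [e, mul_comm] at this
    rw [← this]
    refine setIntegral_congr_fun measurableSet_Ioi (fun t ht => ?_)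
    rw [Complex.ofReal_cpow (le_of_lt ht)]
    push_cast
    congr 2
    ring
  have hEq := h1.eqOn_of_preconnected_of_frequently_eq h2 hconv (z₀ := -1) (by simp) ?_
  · have := hEq (show (-z) ∈ {y : ℂ | y.re < 0} by simpa using hz)
    rw [key] at this
    simpa using this
  · have ht : Filter.Tendsto (fun n : ℕ => ((-1 - 1/((n:ℝ)+1) : ℝ) : ℂ)) Filter.atTop
        (nhdsWithin (-1) {-1}ᶜ) := by
      rw [tendsto_nhdsWithin_iff]
      constructor
      · have : Filter.Tendsto (fun n : ℕ => (-1 - 1/((n:ℝ)+1) : ℝ)) Filter.atTop (nhds (-1 - 0)) :=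
          tendsto_const_nhds.sub tendsto_one_div_add_atTop_nhds_zero_nat
        have := (Complex.continuous_ofReal.tendsto _).comp this
        simpa [Function.comp_def] using this
      · filter_upwards with n
        simp only [Set.mem_compl_iff, Set.mem_singleton_iff]
        intro h
        have h' : (-1 - 1/((n:ℝ)+1) : ℝ) = -1 := by exact_mod_cast h
        have : 0 < 1/((n:ℝ)+1) := by positivity
        linarith
    refine ht.frequently (Filter.Frequently.of_forall (fun n => ?_))
    have : 0 < 1/((n:ℝ)+1) := by positivity
    exact hreal _ (by linarith)

lemma aux_gamma_rpow {s α : ℝ} (hs : 0 < s) (hα : 0 < α) {w : ℂ} (hw : 0 < w.re) :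
    ∫ r in Set.Ioi (0:ℝ), ((r ^ (s - 1) : ℝ) : ℂ) * Complex.exp (-(w * ((r ^ α : ℝ) : ℂ))) =
      ((1 / α * Real.Gamma (s / α) : ℝ) : ℂ) * w ^ (-((s / α : ℝ) : ℂ)) := by
  have h := aux_gamma_complex (div_pos hs hα) hw
  have h2 := integral_comp_rpow_Ioi_of_pos
    (g := fun t : ℝ => ((t ^ (s / α - 1) : ℝ) : ℂ) * Complex.exp (-(w * t))) hα
  rw [h] at h2
  push_cast
  push_cast at h2
  rw [mul_assoc, ← h2, ← integral_const_mul]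
  refine setIntegral_congr_fun measurableSet_Ioi (fun r hr => ?_)
  have hr' : (0:ℝ) < r := hr
  simp only [Complex.real_smul]
  rw [← mul_assoc, ← mul_assoc]
  congr 1
  rw [← Real.rpow_mul hr'.le]
  have : r ^ (s - 1) = 1 / α * (α * r ^ (α - 1) * r ^ (α * (s / α - 1))) := by
    rw [mul_assoc, ← Real.rpow_add hr', ← mul_assoc, one_div, inv_mul_cancel₀ hα.ne', one_mul]
    congr 1
    field_simp
    ring
  rw [this]
  push_cast
  ring

lemma aux_zeta3 : HasSum (fun n : ℕ => (1:ℝ) / (n:ℝ) ^ 3) (zetaR 3) := by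
  have h := zeta_nat_eq_tsum_of_gt_one (k := 3) (by norm_num)
  have hs : Summable (fun n : ℕ => (1:ℝ) / (n:ℝ) ^ 3) :=
    Real.summable_one_div_nat_pow.mpr (by norm_num)
  have : zetaR 3 = ∑' n : ℕ, (1:ℝ) / (n:ℝ) ^ 3 := by
    unfold zetaR
    have e : riemannZeta ((3:ℝ):ℂ) = ((∑' n : ℕ, (1:ℝ) / (n:ℝ) ^ 3 : ℝ) : ℂ) := by
      push_cast
      simpa using h
    rw [e, Complex.ofReal_re]
  rw [this]
  exact hs.hasSum

lemma aux_log_bound {t : ℝ} (h0 : 0 ≤ t) (h1 : t ≤ 1/2) :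
    |t - Real.log (1 + t) - (t^2/2 - t^3/3)| ≤ 2 * t^4 := by
  have h := Real.abs_log_sub_add_sum_range_le (x := -t) (by rw [abs_neg, abs_of_nonneg h0]; linarith) 3
  simp only [Finset.sum_range_succ, Finset.sum_range_zero, abs_neg, abs_of_nonneg h0] at h
  have h2 : t ^ (3+1) / (1 - t) ≤ 2 * t^4 := by
    rw [div_le_iff₀ (by linarith), show (3 + 1 : ℕ) = 4 from rfl]
    nlinarith [mul_nonneg (pow_nonneg h0 4) (show (0:ℝ) ≤ 1 - 2 * t by linarith)]
  rw [← abs_neg]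
  refine le_trans (le_of_eq ?_) (h.trans h2)
  congr 1
  push_cast
  rw [sub_neg_eq_add]
  ring

lemma aux_logGamma : ∃ K : ℝ, ∀ s : ℝ, 0 < s → s ≤ 1/2 →
    |Real.log (Real.Gamma (1 + s)) -
      (- Real.eulerMascheroniConstant * s + Real.pi^2/12 * s^2 - zetaR 3 / 3 * s^3)| ≤ K * s^4 := by
  have hs4 : Summable (fun n : ℕ => (1:ℝ) / (n:ℝ) ^ 4) :=
    Real.summable_one_div_nat_pow.mpr (by norm_num)
  obtain ⟨Z, hZ⟩ := hs4
  refine ⟨2 * Z, fun s hs hs2 => ?_⟩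
  have t1 := Real.BohrMollerup.tendsto_log_gamma hs
  have t2 := (hasSum_zeta_two.tendsto_sum_nat.comp (Filter.tendsto_add_atTop_nat 1))
  have t3 := (aux_zeta3.tendsto_sum_nat.comp (Filter.tendsto_add_atTop_nat 1))
  have t4 := (hZ.tendsto_sum_nat.comp (Filter.tendsto_add_atTop_nat 1))
  have tE := Real.tendsto_harmonic_sub_log
  have hG : Real.log (Real.Gamma (1 + s)) = Real.log (Real.Gamma s) + Real.log s := by
    rw [add_comm, Real.Gamma_add_one hs.ne', Real.log_mul hs.ne' (Real.Gamma_pos_of_pos hs).ne',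
      add_comm]
  rw [hG]
  have T := (((t1.add_const (Real.log s)).sub
    (((tE.const_mul (-s)).add (t2.const_mul (s^2/2))).sub (t3.const_mul (s^3/3))))).abs
  have T4 := t4.const_mul (2 * s^4)
  have hle := le_of_tendsto_of_tendsto T T4 ?_
  · refine le_trans (le_of_eq ?_) (hle.trans (le_of_eq ?_))
    · congr 1; ring
    · ring
  · filter_upwards with n
    have hlf : Real.log (n.factorial) = ∑ m ∈ Finset.range n, Real.log ((m:ℝ)+1) := by
      induction n with
      | zero => simp
      | succ k ih =>
        rw [Finset.sum_range_succ, ← ih, Nat.factorial_succ, Nat.cast_mul, Real.log_mul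
          (by positivity) (by positivity)]
        push_cast; ring
    have eq1 : Real.BohrMollerup.logGammaSeq s n + Real.log s =
        s * Real.log n + ∑ m ∈ Finset.range n, (Real.log ((m:ℝ)+1) - Real.log (s + (m+1))) := by
      rw [Real.BohrMollerup.logGammaSeq, Finset.sum_range_succ', hlf, Finset.sum_sub_distrib]
      push_cast
      simp
      ring
    have eqH : ((harmonic n : ℚ) : ℝ) = ∑ m ∈ Finset.range n, 1/((m:ℝ)+1) := by
      simp [harmonic]
    simp only [Function.comp]
    rw [Finset.sum_range_succ', Finset.sum_range_succ', Finset.sum_range_succ', eq1, eqH]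
    have e : s * Real.log n + ∑ m ∈ Finset.range n, (Real.log ((m:ℝ)+1) - Real.log (s + (m+1))) -
        (-s * (∑ m ∈ Finset.range n, 1/((m:ℝ)+1) - Real.log n) +
          s^2/2 * (∑ k ∈ Finset.range n, 1 / ((k+1 : ℕ):ℝ)^2 + 1 / ((0:ℕ):ℝ)^2) -
          s^3/3 * (∑ k ∈ Finset.range n, 1 / ((k+1 : ℕ):ℝ)^3 + 1 / ((0:ℕ):ℝ)^3)) =
        ∑ m ∈ Finset.range n, (s/(m+1) - Real.log (1 + s/(m+1)) -
          ((s/(m+1))^2/2 - (s/(m+1))^3/3)) := by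
      have : ∀ m ∈ Finset.range n, (s/((m:ℝ)+1) - Real.log (1 + s/(m+1)) -
          ((s/(m+1))^2/2 - (s/(m+1))^3/3)) = (Real.log ((m:ℝ)+1) - Real.log (s + (m+1))) +
            s * (1/((m:ℝ)+1)) - s^2/2 * (1 / ((m+1 : ℕ):ℝ)^2) + s^3/3 * (1 / ((m+1 : ℕ):ℝ)^3) := by
        intro m _
        have hm : (0:ℝ) < (m:ℝ)+1 := by positivity
        have : 1 + s/((m:ℝ)+1) = (s + (m+1))/(m+1) := by field_simp; ring
        rw [this, Real.log_div (by positivity) hm.ne']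
        push_cast
        field_simp
        ring
      rw [Finset.sum_congr rfl this]
      simp only [Finset.sum_add_distrib, Finset.sum_sub_distrib, ← Finset.mul_sum]
      simp
      ring
    rw [e]
    refine (Finset.abs_sum_le_sum_abs _ _).trans ?_
    rw [mul_add, Finset.mul_sum]
    simp only [Nat.cast_zero, ne_eq, OfNat.ofNat_ne_zero, not_false_eq_true, zero_pow, div_zero,
      mul_zero, add_zero]
    apply Finset.sum_le_sum
    intro m _
    have hm : (1:ℝ) ≤ (m:ℝ)+1 := by simp
    refine (aux_log_bound (by positivity) ?_).trans (le_of_eq ?_)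
    · rw [div_le_iff₀ (by positivity)]; nlinarith
    · push_cast; field_simp

open Filter Topology Asymptotics in
def auxT (f : ℝ → ℝ) (a b c : ℝ) : Prop :=
  (fun s : ℝ => f s - (1 + a * s + b * s^2 + c * s^3)) =O[𝓝[>] (0:ℝ)] (fun s : ℝ => s^4)

open Filter Topology Asymptotics in
lemma aux_bdd (f : ℝ → ℝ) (hf : Continuous f) : f =O[𝓝[>] (0:ℝ)] (fun _ : ℝ => (1:ℝ)) :=
  ((hf.tendsto 0).mono_left nhdsWithin_le_nhds).isBigO_one ℝ

open Filter Topology Asymptotics in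
lemma aux_pow4 (f : ℝ → ℝ) (hf : Continuous f) :
    (fun s : ℝ => s^4 * f s) =O[𝓝[>] (0:ℝ)] (fun s : ℝ => s^4) := by
  simpa using (isBigO_refl (fun s : ℝ => s^4) (𝓝[>] (0:ℝ))).mul (aux_bdd f hf)

open Filter Topology Asymptotics in
lemma aux_4one : (fun s : ℝ => s^4) =O[𝓝[>] (0:ℝ)] (fun _ : ℝ => (1:ℝ)) :=
  aux_bdd _ (by fun_prop)

open Filter Topology Asymptotics in
lemma auxT.bdd {f : ℝ → ℝ} {a b c : ℝ} (hf : auxT f a b c) :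
    f =O[𝓝[>] (0:ℝ)] (fun _ : ℝ => (1:ℝ)) := by
  have := (IsBigO.trans hf aux_4one).add
    (aux_bdd (fun s => 1 + a * s + b * s^2 + c * s^3) (by fun_prop))
  simpa using this

open Filter Topology Asymptotics in
lemma auxT.mul {f g : ℝ → ℝ} {a b c a' b' c' : ℝ} (hf : auxT f a b c) (hg : auxT g a' b' c') :
    auxT (fun s => f s * g s) (a + a') (b + a * a' + b') (c + b * a' + a * b' + c') := by
  have h1 := IsBigO.mul hf hg.bdd
  have h2 := IsBigO.mul (aux_bdd (fun s => 1 + a * s + b * s^2 + c * s^3) (by fun_prop)) hg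
  have h3 := aux_pow4 (fun s => (a * c' + b * b' + c * a') + (b * c' + c * b') * s + c * c' * s^2)
    (by fun_prop)
  simp only [mul_one, one_mul] at h1 h2
  refine ((h1.add h2).add h3).congr_left (fun s => ?_)
  ring

open Filter Topology Asymptotics in
lemma auxT.congr {f g : ℝ → ℝ} {a b c a' b' c' : ℝ} (hf : auxT f a b c)
    (h : f =ᶠ[𝓝[>] 0] g) (ha : a = a') (hb : b = b') (hc : c = c') : auxT g a' b' c' := by
  subst ha hb hc
  refine IsBigO.congr' hf ?_ EventuallyEq.rfl
  filter_upwards [h] with s hs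
  rw [hs]

open Filter Topology Asymptotics in
lemma aux_t0 (f : ℝ → ℝ) (hf : Continuous f) (h0 : f 0 = 0) : Tendsto f (𝓝[>] (0:ℝ)) (𝓝 0) := by
  have := (hf.tendsto 0).mono_left (nhdsWithin_le_nhds (s := Set.Ioi 0))
  rwa [h0] at this

open Filter Topology Asymptotics in
lemma auxT_exp1 (a : ℝ) : auxT (fun s => Real.exp (a * s)) a (a^2/2) (a^3/6) := by
  have h := (Real.exp_sub_sum_range_isBigO_pow 4).comp_tendsto
    (aux_t0 (fun s => a * s) (by fun_prop) (by simp))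
  have h2 := h.trans ((aux_pow4 (fun _ => a^4) (by fun_prop)).congr_left
    (f₂ := ((fun x => x ^ 4) ∘ fun s => a * s)) (fun s => by simp only [Function.comp]; ring))
  refine h2.congr_left (fun s => ?_)
  simp only [Function.comp, Finset.sum_range_succ, Finset.sum_range_zero, Nat.factorial]
  push_cast
  ring

open Filter Topology Asymptotics in
lemma auxT_exp2 (a : ℝ) : auxT (fun s => Real.exp (a * s^2)) 0 a 0 := by
  have h := (Real.exp_sub_sum_range_isBigO_pow 2).comp_tendsto
    (aux_t0 (fun s => a * s^2) (by fun_prop) (by simp))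
  have h2 := h.trans ((aux_pow4 (fun _ => a^2) (by fun_prop)).congr_left
    (f₂ := ((fun x => x ^ 2) ∘ fun s => a * s^2)) (fun s => by simp only [Function.comp]; ring))
  refine h2.congr_left (fun s => ?_)
  simp only [Function.comp, Finset.sum_range_succ, Finset.sum_range_zero, Nat.factorial]
  push_cast
  ring

open Filter Topology Asymptotics in
lemma auxT_exp3 (a : ℝ) : auxT (fun s => Real.exp (a * s^3)) 0 0 a := by
  have h := (Real.exp_sub_sum_range_isBigO_pow 2).comp_tendsto
    (aux_t0 (fun s => a * s^3) (by fun_prop) (by simp))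
  have h2 := h.trans ((aux_pow4 (fun s => a^2 * s^2) (by fun_prop)).congr_left
    (f₂ := ((fun x => x ^ 2) ∘ fun s => a * s^3)) (fun s => by simp only [Function.comp]; ring))
  refine h2.congr_left (fun s => ?_)
  simp only [Function.comp, Finset.sum_range_succ, Finset.sum_range_zero, Nat.factorial]
  push_cast
  ring

open Filter Topology Asymptotics in
lemma auxT_expR {R : ℝ → ℝ} (hR : R =O[𝓝[>] (0:ℝ)] (fun s : ℝ => s^4)) :
    auxT (fun s => Real.exp (R s)) 0 0 0 := by
  have h := (Real.exp_sub_sum_range_isBigO_pow 1).comp_tendsto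
    (hR.trans_tendsto (aux_t0 (fun s => s^4) (by fun_prop) (by simp)))
  have h2 := h.trans (hR.congr_left (f₂ := ((fun x => x ^ 1) ∘ R)) (fun s => by simp))
  refine h2.congr_left (fun s => ?_)
  simp

open Filter Topology Asymptotics in
lemma auxT_cos (a : ℝ) : auxT (fun s => Real.cos (a * s)) 0 (-(a^2/2)) 0 := by
  have h : (fun s => Real.cos (a * s) - (1 - (a*s)^2/2)) =O[𝓝[>] (0:ℝ)] (fun s => s^4 * a^4) := by
    refine IsBigO.of_bound (5/96) ?_
    have := (aux_t0 (fun s => a * s) (by fun_prop) (by simp)).eventually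
      (Metric.ball_mem_nhds 0 one_pos)
    filter_upwards [this] with s hs
    have hs' : |a * s| ≤ 1 := by
      have : dist (a * s) 0 < 1 := hs
      rw [Real.dist_0_eq_abs] at this
      exact this.le
    have := Real.cos_bound hs'
    rw [Real.norm_eq_abs, Real.norm_eq_abs]
    refine this.trans (le_of_eq ?_)
    rw [abs_of_nonneg (by positivity : 0 ≤ s^4 * a^4), ← abs_pow,
      abs_of_nonneg (by positivity : 0 ≤ (a*s)^4)]
    ring
  refine (h.trans (aux_pow4 (fun _ => a^4) (by fun_prop))).congr_left (fun s => ?_)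
  ring

open Filter Topology Asymptotics in
lemma auxT_inv_cos (a : ℝ) : auxT (fun s => (Real.cos (a * s))⁻¹) 0 (a^2/2) 0 := by
  have hc := auxT_cos a
  have ht : Tendsto (fun s => Real.cos (a * s)) (𝓝[>] (0:ℝ)) (𝓝 1) := by
    have : Continuous (fun s => Real.cos (a * s)) := by fun_prop
    have := (this.tendsto 0).mono_left (nhdsWithin_le_nhds (s := Set.Ioi 0))
    simpa using this
  have hi : (fun s => (Real.cos (a * s))⁻¹) =O[𝓝[>] (0:ℝ)] (fun _ : ℝ => (1:ℝ)) :=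
    (ht.inv₀ one_ne_zero).isBigO_one ℝ
  have h1 := (IsBigO.mul hc (aux_bdd (fun s => -(1 + a^2/2*s^2)) (by fun_prop))).add
    ((aux_pow4 (fun _ => a^4/4) (by fun_prop)).congr_right (fun s => (mul_one (s^4)).symm))
  have h2 := h1.mul hi
  simp only [mul_one] at h2
  refine IsBigO.congr' h2 ?_ EventuallyEq.rfl
  filter_upwards [ht.eventually_ne one_ne_zero] with s hs
  field_simp
  ring

open Filter Topology Asymptotics in
lemma aux_gammaR {β : ℝ} (hβ : 0 < β) :
    (fun s => Real.log (Real.Gamma (1 + β * s)) - (- Real.eulerMascheroniConstant * (β * s)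
      + Real.pi^2/12 * (β*s)^2 - zetaR 3 / 3 * (β*s)^3)) =O[𝓝[>] (0:ℝ)] (fun s => s^4) := by
  obtain ⟨K, hK⟩ := aux_logGamma
  refine IsBigO.of_bound (K * β^4) ?_
  have h1 := (aux_t0 (fun s => β * s) (by fun_prop) (by simp)).eventually
      (Iio_mem_nhds (show (0:ℝ) < 1/2 by norm_num))
  filter_upwards [h1, self_mem_nhdsWithin] with s hs hs0
  have hs0' : (0:ℝ) < s := hs0
  rw [Real.norm_eq_abs, Real.norm_eq_abs, abs_of_nonneg (by positivity : 0 ≤ s^4)]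
  refine (hK (β * s) (by positivity) (le_of_lt hs)).trans (le_of_eq ?_)
  ring

open Filter Topology Asymptotics in
lemma aux_expansion {β θ τ : ℝ} (hβ : 0 < β) :
    auxT (fun s => Real.Gamma (1 + β * s) / Real.Gamma (1 + s) *
        Real.exp (-(τ + Real.eulerMascheroniConstant * (1 - β)) * s) *
        Real.cos (Real.pi/2 * θ * s) * (Real.cos (Real.pi/2 * s))⁻¹)
      (-τ) (τ^2/2 + (Real.pi^2/4*(1-θ^2) + Real.pi^2/6*(β^2-1))/2)
      (-(τ^3 + 3*τ*(Real.pi^2/4*(1-θ^2) + Real.pi^2/6*(β^2-1)) + 2*zetaR 3*(β^3-1))/6) := by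
  have hR := (aux_gammaR hβ).sub (aux_gammaR one_pos)
  have h := (((((auxT_exp1 (-τ)).mul (auxT_exp2 (Real.pi^2/12*(β^2-1)))).mul
    (auxT_exp3 (-(zetaR 3/3*(β^3-1))))).mul (auxT_expR hR)).mul
    (auxT_cos (Real.pi/2*θ))).mul (auxT_inv_cos (Real.pi/2))
  refine h.congr ?_ ?_ ?_ ?_
  · filter_upwards [self_mem_nhdsWithin] with s hs
    have hs' : (0:ℝ) < s := hs
    congr 2
    rw [← Real.exp_add, ← Real.exp_add, ← Real.exp_add]
    have g1 : 0 < Real.Gamma (1 + β * s) := Real.Gamma_pos_of_pos (by positivity)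
    have g2 : 0 < Real.Gamma (1 + s) := Real.Gamma_pos_of_pos (by positivity)
    rw [one_mul]
    rw [← Real.exp_log (div_pos g1 g2), ← Real.exp_add, Real.log_div g1.ne' g2.ne']
    congr 1
    ring
  · ring
  · ring
  · ring

open Filter Topology Asymptotics in
lemma auxT.third_diff {F : ℝ → ℝ} {a b c : ℝ} (hF : auxT F a b c) :
    Tendsto (fun s => (F (3*s) - 3 * F (2*s) + 3 * F s - 1) / s^3) (𝓝[>] (0:ℝ)) (𝓝 (6*c)) := by
  have ht : ∀ k : ℝ, 0 < k → Tendsto (fun s => k * s) (𝓝[>] (0:ℝ)) (𝓝[>] (0:ℝ)) := by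
    intro k hk
    rw [tendsto_nhdsWithin_iff]
    refine ⟨aux_t0 _ (by fun_prop) (by simp), ?_⟩
    filter_upwards [self_mem_nhdsWithin] with s hs
    exact mul_pos hk hs
  have hk : ∀ k : ℝ, 0 < k → (fun s : ℝ => F (k*s) - (1 + a * (k*s) + b * (k*s)^2 + c * (k*s)^3))
      =O[𝓝[>] (0:ℝ)] (fun s : ℝ => s^4) := by
    intro k hk
    have h := IsBigO.comp_tendsto hF (ht k hk)
    exact h.trans ((aux_pow4 (fun _ => k^4) (by fun_prop)).congr_left
      (fun s => by simp only [Function.comp]; ring))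
  have h := ((hk 3 (by norm_num)).sub ((hk 2 (by norm_num)).const_mul_left 3)).add
    ((hk 1 one_pos).const_mul_left 3)
  have h2 : (fun s => (F (3*s) - 3 * F (2*s) + 3 * F s - 1) / s^3 - 6*c) =O[𝓝[>] (0:ℝ)]
      (fun s : ℝ => s) := by
    have h3 := h.mul (isBigO_refl (fun s : ℝ => (s^3)⁻¹) (𝓝[>] (0:ℝ)))
    refine IsBigO.congr' h3 ?_ ?_
    · filter_upwards [self_mem_nhdsWithin] with s hs
      have hs' : s ≠ 0 := ne_of_gt hs
      rw [one_mul]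
      field_simp
      ring
    · filter_upwards [self_mem_nhdsWithin] with s hs
      have hs' : s ≠ 0 := ne_of_gt hs
      field_simp
  have h4 := h2.trans_tendsto (aux_t0 (fun s => s) (by fun_prop) rfl)
  simpa using h4.add_const (6*c)

lemma aux_exp_quot (y : ℝ) {s : ℝ} (hs : 0 < s) :
    |(Real.exp (-(s * y)) - 1) / s| ≤ |y| * (1 + Real.exp (-(s * y))) := by
  rw [abs_div, abs_of_pos hs, div_le_iff₀ hs]
  have h1 := Real.add_one_le_exp (-(s*y))
  have h2 := Real.add_one_le_exp (s*y)
  have h3 : Real.exp (s*y) * Real.exp (-(s*y)) = 1 := by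
    rw [← Real.exp_add]; simp
  have h4 := Real.exp_pos (-(s*y))
  have h5 := Real.exp_pos (s*y)
  have h6 : 1 - Real.exp (-(s*y)) ≤ s * y := by linarith
  have h7 : Real.exp (-(s*y)) - 1 ≤ -(s*y) * Real.exp (-(s*y)) := by nlinarith
  have h8 : s * y ≤ s * |y| := mul_le_mul_of_nonneg_left (le_abs_self y) hs.le
  have h9 : s * (-y) ≤ s * |y| := mul_le_mul_of_nonneg_left (neg_le_abs y) hs.le
  have h10 : 0 ≤ s * |y| := by positivity
  rw [abs_le]
  constructor <;> nlinarith

open Filter Topology in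
lemma aux_diff_limit (μ : Measure ℝ) [IsProbabilityMeasure μ]
    (h0 : ∀ᵐ x ∂μ, x ≠ 0)
    (hlog : ∀ p : ℕ, Integrable (fun x => |(Real.log |x|)| ^ p) μ)
    (hint : ∀ s : ℝ, 0 < s → s < 1 → Integrable (fun x => |x| ^ (-s)) μ) :
    Tendsto (fun s => (∫ x, |x| ^ (-(3*s)) ∂μ - 3 * ∫ x, |x| ^ (-(2*s)) ∂μ
      + 3 * ∫ x, |x| ^ (-s) ∂μ - 1) / s^3) (𝓝[>] (0:ℝ))
      (𝓝 (- ∫ x, (Real.log |x|)^3 ∂μ)) := by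
  have hev : ∀ᶠ s in 𝓝[>] (0:ℝ), 0 < s ∧ s < 1/12 := by
    filter_upwards [Ioo_mem_nhdsGT (show (0:ℝ) < 1/12 by norm_num)] with s hs
    exact hs
  have hT : Tendsto (fun s => ∫ x, ((Real.exp (-(s * Real.log |x|)) - 1) / s)^3 ∂μ) (𝓝[>] (0:ℝ))
      (𝓝 (∫ x, (- Real.log |x|)^3 ∂μ)) := by
    refine tendsto_integral_filter_of_dominated_convergence
      (fun x => 12 * |(Real.log |x|)|^3 + 4 * (|(Real.log |x|)|^6 + |x| ^ (-(1/2:ℝ)))) ?_ ?_ ?_ ?_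
    · filter_upwards with s
      apply Measurable.aestronglyMeasurable
      fun_prop
    · filter_upwards [hev] with s hs
      filter_upwards [h0] with x hx
      have hx' : 0 < |x| := abs_pos.mpr hx
      set y := Real.log |x| with hy
      have hxy : |x| ^ (-(1/2:ℝ)) = Real.exp (-(y/2)) := by
        rw [Real.rpow_def_of_pos hx', ← hy]; congr 1; ring
      rw [hxy, norm_pow, Real.norm_eq_abs]
      have b1 := aux_exp_quot y hs.1
      have b2 : |(Real.exp (-(s * y)) - 1) / s|^3 ≤ (|y| * (1 + Real.exp (-(s * y))))^3 :=
        pow_le_pow_left₀ (abs_nonneg _) b1 3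
      refine b2.trans ?_
      set e := Real.exp (-(s*y)) with he
      have e0 : 0 < e := Real.exp_pos _
      have e1 : (1 + e)^3 ≤ 4 * (1 + e^3) := by nlinarith [mul_nonneg (by linarith : 0 ≤ 1 + e) (sq_nonneg (1 - e))]
      set q := Real.exp (-(y/4)) with hq
      have q0 : 0 < q := Real.exp_pos _
      have q2 : Real.exp (-(y/2)) = q^2 := by
        rw [hq, ← Real.exp_nat_mul]; congr 1; push_cast; ring
      have e3 : e^3 ≤ 1 + q := by
        have : e^3 = Real.exp (-(3*s*y)) := by
          rw [he, ← Real.exp_nat_mul]; congr 1; push_cast; ring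
        rw [this]
        rcases le_total 0 y with hy0 | hy0
        · have : Real.exp (-(3*s*y)) ≤ 1 := Real.exp_le_one_iff.mpr (by
            have := mul_nonneg hs.1.le hy0; linarith)
          linarith
        · have : Real.exp (-(3*s*y)) ≤ q := Real.exp_le_exp.mpr (by nlinarith)
          linarith
      rw [mul_pow, q2]
      have y0 : 0 ≤ |y|^3 := by positivity
      have b3 : |y|^3 * (1+e)^3 ≤ |y|^3 * (4 * (2 + q)) :=
        mul_le_mul_of_nonneg_left (by linarith) y0
      refine b3.trans ?_
      have : |y|^6 = (|y|^3)^2 := by ring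
      rw [this]
      nlinarith [sq_nonneg (|y|^3 - q), sq_nonneg (|y|^3 + q)]
    · exact ((hlog 3).const_mul 12).add (((hlog 6).add (hint (1/2) (by norm_num) (by norm_num))).const_mul 4)
    · filter_upwards with x
      refine Tendsto.pow ?_ 3
      set y := Real.log |x|
      have hd : HasDerivAt (fun s : ℝ => Real.exp (-(s * y))) (-y) 0 := by
        have := ((hasDerivAt_id (0:ℝ)).mul_const y).neg.exp
        simpa using this
      have := hd.tendsto_slope_zero_right
      refine this.congr (fun s => ?_)
      simp
      ring
  have hlim : ∫ x, (- Real.log |x|)^3 ∂μ = - ∫ x, (Real.log |x|)^3 ∂μ := by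
    rw [← integral_neg]; congr 1; ext x; ring
  rw [hlim] at hT
  refine hT.congr' ?_
  filter_upwards [hev] with s hs
  have i3 := hint (3*s) (by linarith) (by linarith)
  have i2 := hint (2*s) (by linarith) (by linarith)
  have i1 := hint s (by linarith) (by linarith)
  have hcong : ∫ x, ((Real.exp (-(s * Real.log |x|)) - 1) / s)^3 ∂μ =
      ∫ x, (|x| ^ (-(3*s)) - 3 * |x| ^ (-(2*s)) + 3 * |x| ^ (-s) - 1) / s^3 ∂μ := by
    apply integral_congr_ae
    filter_upwards [h0] with x hx
    have hx' : 0 < |x| := abs_pos.mpr hx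
    have hp : ∀ k : ℕ, |x| ^ (-(k * s)) = Real.exp (-(s * Real.log |x|))^k := by
      intro k
      rw [Real.rpow_def_of_pos hx', ← Real.exp_nat_mul]; congr 1; ring
    have p1 := hp 1
    have p2 := hp 2
    have p3 := hp 3
    push_cast at p1 p2 p3
    rw [one_mul] at p1
    rw [p1, p2, p3]
    ring
  have j2 : Integrable (fun x => 3 * |x| ^ (-(2*s))) μ := i2.const_mul 3
  have j1 : Integrable (fun x => 3 * |x| ^ (-s)) μ := i1.const_mul 3
  have k1 : Integrable (fun x => |x| ^ (-(3*s)) - 3 * |x| ^ (-(2*s))) μ := i3.sub j2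
  have k2 : Integrable (fun x => |x| ^ (-(3*s)) - 3 * |x| ^ (-(2*s)) + 3 * |x| ^ (-s)) μ :=
    k1.add j1
  rw [hcong, integral_div, integral_sub k2 (integrable_const _), integral_add k1 j1,
    integral_sub i3 j2, integral_const_mul, integral_const_mul]
  simp

lemma aux_gauss_moment {s : ℝ} (hs1 : s < 1) :
    Integrable (fun z : ℝ => |z| ^ (-s)) (gaussianReal 0 1) ∧
    ∫ z, |z| ^ (-s) ∂(gaussianReal 0 1) =
      2 ^ (-(s/2)) * Real.Gamma ((1 - s)/2) / Real.sqrt Real.pi := by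
  have hv : (1 : NNReal) ≠ 0 := one_ne_zero
  have hpdf : ∀ z : ℝ, gaussianPDFReal 0 1 z =
      (Real.sqrt (2 * Real.pi))⁻¹ * Real.exp (-(1/2) * |z| ^ (2:ℝ)) := by
    intro z
    rw [gaussianPDFReal]
    rw [Real.rpow_two, sq_abs]
    simp only [NNReal.coe_one, mul_one, sub_zero]
    congr 2
    ring
  have hval := integral_rpow_mul_exp_neg_mul_rpow (p := 2) (q := -s) (b := 1/2) two_pos
    (by linarith) (by norm_num)
  have hmain : ∫ z, |z| ^ (-s) ∂(gaussianReal 0 1) =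
      2 ^ (-(s/2)) * Real.Gamma ((1 - s)/2) / Real.sqrt Real.pi := by
    rw [integral_gaussianReal_eq_integral_smul hv]
    have : ∀ z : ℝ, gaussianPDFReal 0 1 z • |z| ^ (-s) =
      (Real.sqrt (2 * Real.pi))⁻¹ * (|z| ^ (-s) * Real.exp (-(1/2) * |z| ^ (2:ℝ))) := by
      intro z; rw [hpdf, smul_eq_mul]; ring
    simp_rw [this]
    rw [integral_const_mul, integral_comp_abs (f := fun z : ℝ => z ^ (-s) * Real.exp (-(1/2) * z ^ (2:ℝ))),
      hval]
    rw [Real.sqrt_mul (by norm_num), show (-s + 1)/2 = (1 - s)/2 by ring,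
      show -(-s+1)/2 = s/2 - 1/2 by ring, one_div, Real.inv_rpow (by norm_num),
      ← Real.rpow_neg (by norm_num), Real.sqrt_eq_rpow 2,
      show -(s/2 - 2⁻¹) = -(s/2) + 1/2 by ring, Real.rpow_add (by norm_num)]
    have : (2:ℝ) ^ (1/2:ℝ) ≠ 0 := by positivity
    have : Real.sqrt Real.pi ≠ 0 := by positivity
    field_simp
  refine ⟨Integrable.of_integral_ne_zero ?_, hmain⟩
  rw [hmain]
  have : 0 < Real.Gamma ((1-s)/2) := Real.Gamma_pos_of_pos (by linarith)
  positivity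

lemma aux_gamma_identity {s : ℝ} (hs : 0 < s) (hs1 : s < 1) :
    2 ^ (-s) * 2 * Real.Gamma ((1 - s)/2) / (Real.sqrt Real.pi * (s * Real.Gamma (s/2))) =
      1 / (Real.Gamma (1 + s)) * (Real.cos (Real.pi/2 * s))⁻¹ := by
  have hd := Real.Gamma_mul_Gamma_add_half (s/2)
  have hr := Real.Gamma_mul_Gamma_one_sub ((1-s)/2)
  have hc : 0 < Real.cos (Real.pi/2 * s) := Real.cos_pos_of_mem_Ioo (by
    constructor <;> nlinarith [Real.pi_pos])
  rw [show 1 - (1-s)/2 = s/2 + 1/2 by ring, show Real.pi * ((1-s)/2) = Real.pi/2 - Real.pi/2*s by ring,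
    Real.sin_pi_div_two_sub] at hr
  rw [show 2 * (s/2) = s by ring, show 1 - s = -s + 1 by ring, Real.rpow_add (by norm_num),
    Real.rpow_one] at hd
  rw [add_comm 1 s, Real.Gamma_add_one hs.ne']
  have g1 : 0 < Real.Gamma ((1-s)/2) := Real.Gamma_pos_of_pos (by linarith)
  have g2 : 0 < Real.Gamma (s/2) := Real.Gamma_pos_of_pos (by linarith)
  have g3 : 0 < Real.Gamma (s/2+1/2) := Real.Gamma_pos_of_pos (by linarith)
  have g4 : 0 < Real.Gamma s := Real.Gamma_pos_of_pos hs
  have hp : Real.sqrt Real.pi * Real.sqrt Real.pi = Real.pi := Real.mul_self_sqrt Real.pi_pos.le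
  have hp0 : 0 < Real.sqrt Real.pi := by positivity
  have h2 : 0 < (2:ℝ) ^ (-s) := by positivity
  rw [eq_div_iff hc.ne'] at hr
  rw [← one_div, div_mul_div_comm, one_mul, div_eq_div_iff (by positivity) (by positivity)]
  have key : Real.Gamma (s/2+1/2) * (Real.sqrt Real.pi * (2 ^ (-s) * 2 * Real.Gamma ((1 - s)/2) * (s * Real.Gamma s * Real.cos (Real.pi/2 * s)))) = Real.Gamma (s/2+1/2) * (Real.sqrt Real.pi * (1 * (Real.sqrt Real.pi * (s * Real.Gamma (s/2))))) := by
    linear_combination (Real.sqrt Real.pi * 2 ^ (-s) * 2 * s * Real.Gamma s) * hr - s * Real.sqrt Real.pi * Real.sqrt Real.pi * hd - (Real.sqrt Real.pi * 2 ^ (-s) * 2 * s * Real.Gamma s)* hp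
  exact mul_left_cancel₀ hp0.ne' (mul_left_cancel₀ g3.ne' key)

lemma aux_parseval (μ : Measure ℝ) [IsProbabilityMeasure μ] (r : ℝ) :
    ∫ z, charFun μ (r * z) ∂(gaussianReal 0 1) =
      ((∫ x, Real.exp (-(x^2/2) * r ^ (2:ℝ)) ∂μ : ℝ) : ℂ) := by
  simp_rw [charFun_apply_real]
  rw [integral_integral_swap]
  · rw [← integral_complex_ofReal]
    congr 1
    ext x
    have := charFun_gaussianReal (μ := 0) (v := 1) (r * x)
    rw [charFun_apply_real] at this
    push_cast at this ⊢
    simp only [mul_zero, zero_mul, one_mul, zero_sub] at this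
    rw [Real.rpow_two]
    push_cast
    rw [show -((x:ℂ)^2/2) * (r:ℂ)^2 = -((r * x : ℂ)^2/2) by ring, ← this]
    congr 1
    ext z
    congr 1
    ring
  · refine Integrable.of_bound (C := 1) ?_ ?_
    · apply Measurable.aestronglyMeasurable
      unfold Function.uncurry
      fun_prop
    · filter_upwards with p
      simp only [Function.uncurry]
      have := Complex.norm_exp_ofReal_mul_I (r * p.1 * p.2)
      push_cast at this ⊢
      exact this.le

lemma aux_charFun_neg_form {μ : Measure ℝ} {α : ℝ} {w : ℂ}
    (hφ : ∀ k : ℝ, 0 < k → charFun μ k = Complex.exp (-(w * ((k ^ α : ℝ) : ℂ))))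
    (k : ℝ) (hk : k < 0) : charFun μ k =
      Complex.exp (-((starRingEnd ℂ) w * ((|k| ^ α : ℝ) : ℂ))) := by
  have h := hφ (-k) (by linarith)
  rw [abs_of_neg hk, ← neg_neg k, charFun_neg, h, ← Complex.exp_conj, neg_neg]
  simp only [map_neg, map_mul, Complex.conj_ofReal]

lemma aux_charFun_form {μ : Measure ℝ} {α : ℝ} {w : ℂ}
    (hφ : ∀ k : ℝ, 0 < k → charFun μ k = Complex.exp (-(w * ((k ^ α : ℝ) : ℂ))))
    (z : ℝ) (hz : z ≠ 0) : ∃ w' : ℂ, (w' = w ∨ w' = (starRingEnd ℂ) w) ∧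
      ∀ r : ℝ, 0 < r → charFun μ (r * z) =
        Complex.exp (-((w' * ((|z| ^ α : ℝ) : ℂ)) * ((r ^ α : ℝ) : ℂ))) := by
  rcases lt_or_gt_of_ne hz with h | h
  · refine ⟨(starRingEnd ℂ) w, Or.inr rfl, fun r hr => ?_⟩
    rw [aux_charFun_neg_form hφ _ (mul_neg_of_pos_of_neg hr h), abs_mul, abs_of_pos hr,
      Real.mul_rpow hr.le (abs_nonneg z)]
    push_cast
    ring_nf
  · refine ⟨w, Or.inl rfl, fun r hr => ?_⟩
    rw [hφ _ (mul_pos hr h), abs_of_pos h, Real.mul_rpow hr.le h.le]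
    push_cast
    ring_nf

lemma aux_r_integral {μ : Measure ℝ} {α s : ℝ} {w : ℂ} (hα : 0 < α) (hs : 0 < s) (hw : 0 < w.re)
    (hφ : ∀ k : ℝ, 0 < k → charFun μ k = Complex.exp (-(w * ((k ^ α : ℝ) : ℂ))))
    (z : ℝ) (hz : z ≠ 0) :
    (∫ r in Set.Ioi (0:ℝ), ((r ^ (s - 1) : ℝ) : ℂ) * charFun μ (r * z)).re =
      1 / α * Real.Gamma (s / α) * (w ^ (-((s / α : ℝ) : ℂ))).re * |z| ^ (-s) ∧
    IntegrableOn (fun r : ℝ => ‖((r ^ (s - 1) : ℝ) : ℂ) * charFun μ (r * z)‖) (Set.Ioi (0:ℝ)) ∧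
    (∫ r in Set.Ioi (0:ℝ), ‖((r ^ (s - 1) : ℝ) : ℂ) * charFun μ (r * z)‖) =
      w.re ^ (-(s/α)) * (1 / α) * Real.Gamma (s / α) * |z| ^ (-s) := by
  obtain ⟨w', hw', hf⟩ := aux_charFun_form hφ z hz
  have hz' : 0 < |z| := abs_pos.mpr hz
  have hzα : 0 < |z| ^ α := Real.rpow_pos_of_pos hz' _
  have hre : w'.re = w.re := by rcases hw' with h | h <;> simp [h]
  have harg : w.arg ≠ Real.pi := by
    intro h
    rw [Complex.arg_eq_pi_iff] at h
    linarith [h.1]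
  have hpow : (w' ^ (-((s / α : ℝ) : ℂ))).re = (w ^ (-((s / α : ℝ) : ℂ))).re := by
    rcases hw' with h | h
    · rw [h]
    · rw [h, Complex.conj_cpow _ _ harg]
      simp
  have hrw : 0 < (w' * ((|z| ^ α : ℝ) : ℂ)).re := by
    rw [Complex.re_mul_ofReal, hre]; positivity
  have hzs : (|z| ^ α) ^ (-(s/α)) = |z| ^ (-s) := by
    rw [← Real.rpow_mul hz'.le]; congr 1; field_simp
  have hnorm : ∀ r ∈ Set.Ioi (0:ℝ), ‖((r ^ (s - 1) : ℝ) : ℂ) * charFun μ (r * z)‖ =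
      r ^ (s-1) * Real.exp (-(w.re * |z| ^ α) * r ^ α) := by
    intro r hr
    have hr' : (0:ℝ) < r := hr
    rw [hf r hr, norm_mul, Complex.norm_exp, Complex.norm_real, Real.norm_eq_abs,
      abs_of_nonneg (Real.rpow_nonneg hr'.le _), Complex.neg_re, Complex.re_mul_ofReal,
      Complex.re_mul_ofReal, hre, neg_mul]
  refine ⟨?_, ?_, ?_⟩
  · have : ∫ r in Set.Ioi (0:ℝ), ((r ^ (s - 1) : ℝ) : ℂ) * charFun μ (r * z) =
        ∫ r in Set.Ioi (0:ℝ), ((r ^ (s - 1) : ℝ) : ℂ) *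
          Complex.exp (-((w' * ((|z| ^ α : ℝ) : ℂ)) * ((r ^ α : ℝ) : ℂ))) :=
      setIntegral_congr_fun measurableSet_Ioi (fun r hr => by simp only [hf r hr])
    rw [this, aux_gamma_rpow hs hα hrw]
    rw [Complex.re_ofReal_mul]
    have : (w' * ((|z| ^ α : ℝ) : ℂ)) ^ (-((s / α : ℝ) : ℂ)) =
        w' ^ (-((s / α : ℝ) : ℂ)) * ((|z| ^ (-s) : ℝ) : ℂ) := by
      have hw0 : w' ≠ 0 := by
        intro h
        rw [h] at hre
        simp at hre
        linarith
      have hz0 : ((|z| ^ α : ℝ) : ℂ) ≠ 0 := by exact_mod_cast hzα.ne'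
      rw [Complex.cpow_def_of_ne_zero (mul_ne_zero hw0 hz0), Complex.cpow_def_of_ne_zero hw0,
        mul_comm w', Complex.log_ofReal_mul hzα hw0, ← hzs, Real.rpow_def_of_pos hzα,
        Complex.ofReal_exp, ← Complex.exp_add]
      congr 1
      push_cast
      ring
    rw [this, Complex.re_mul_ofReal, hpow]
    ring
  · refine (integrableOn_rpow_mul_exp_neg_mul_rpow (p := α) (s := s - 1) (b := w.re * |z| ^ α)
      (by linarith) hα (by positivity)).congr_fun (fun r hr => (hnorm r hr).symm) measurableSet_Ioi
  · rw [setIntegral_congr_fun measurableSet_Ioi hnorm,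
      integral_rpow_mul_exp_neg_mul_rpow hα (by linarith) (by positivity)]
    rw [show s - 1 + 1 = s by ring, neg_div, Real.mul_rpow hw.le hzα.le, hzs]
    ring

lemma aux_moment (μ : Measure ℝ) [IsProbabilityMeasure μ] (h0 : ∀ᵐ x ∂μ, x ≠ 0)
    {α s : ℝ} {w : ℂ} (hα : 0 < α) (hs : 0 < s) (hs1 : s < 1) (hw : 0 < w.re)
    (hφ : ∀ k : ℝ, 0 < k → charFun μ k = Complex.exp (-(w * ((k ^ α : ℝ) : ℂ)))) :
    Integrable (fun x => |x| ^ (-s)) μ ∧ ∫ x, |x| ^ (-s) ∂μ =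
      Real.Gamma (1 + s / α) / Real.Gamma (1 + s) * (w ^ (-((s / α : ℝ) : ℂ))).re *
        (Real.cos (Real.pi/2 * s))⁻¹ := by
  obtain ⟨gI, gV⟩ := aux_gauss_moment hs1
  have hγ0 : ∀ᵐ z ∂(gaussianReal 0 1), z ≠ 0 := by
    have : NullSingletonClass (gaussianReal 0 1) := nullSingletonClass_gaussianReal one_ne_zero
    exact measure_eq_zero_iff_ae_notMem.mp (measure_singleton (0:ℝ))
  have hf : Integrable (fun p : ℝ × ℝ => ((p.1 ^ (s - 1) : ℝ) : ℂ) * charFun μ (p.1 * p.2))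
      ((volume.restrict (Set.Ioi (0:ℝ))).prod (gaussianReal 0 1)) := by
    have hm : Measurable (fun p : ℝ × ℝ => ((p.1 ^ (s - 1) : ℝ) : ℂ) * charFun μ (p.1 * p.2)) := by
      have h1 : Measurable (fun p : ℝ × ℝ => charFun μ (p.1 * p.2)) :=
        measurable_charFun.comp (by fun_prop)
      have h2 : Measurable (fun p : ℝ × ℝ => ((p.1 ^ (s - 1) : ℝ) : ℂ)) := by fun_prop
      exact h2.mul h1
    rw [integrable_prod_iff' hm.aestronglyMeasurable]
    constructor
    · filter_upwards [hγ0] with z hz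
      have := (aux_r_integral hα hs hw hφ z hz).2.1
      exact (integrable_norm_iff ((hm.comp measurable_prodMk_right).aestronglyMeasurable)).mp this
    · refine (gI.const_mul (w.re ^ (-(s/α)) * (1 / α) * Real.Gamma (s / α))).congr ?_
      filter_upwards [hγ0] with z hz
      exact (aux_r_integral hα hs hw hφ z hz).2.2.symm
  have hH : ∀ r : ℝ, ∫ z, ((r ^ (s - 1) : ℝ) : ℂ) * charFun μ (r * z) ∂(gaussianReal 0 1) =
      ((∫ x, r ^ (s - 1) * Real.exp (-(x^2/2) * r ^ (2:ℝ)) ∂μ : ℝ) : ℂ) := by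
    intro r
    rw [integral_const_mul, aux_parseval, integral_const_mul]
    push_cast
    rfl
  have hg : Integrable (fun p : ℝ × ℝ => p.1 ^ (s - 1) * Real.exp (-(p.2^2/2) * p.1 ^ (2:ℝ)))
      ((volume.restrict (Set.Ioi (0:ℝ))).prod μ) := by
    have hm : Measurable (fun p : ℝ × ℝ => p.1 ^ (s - 1) * Real.exp (-(p.2^2/2) * p.1 ^ (2:ℝ))) := by
      fun_prop
    rw [integrable_prod_iff hm.aestronglyMeasurable]
    constructor
    · filter_upwards with r
      apply Integrable.const_mul
      refine Integrable.of_bound (C := 1) (Measurable.aestronglyMeasurable (by fun_prop)) ?_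
      filter_upwards with x
      rw [Real.norm_eq_abs, Real.abs_exp, Real.exp_le_one_iff, Real.rpow_two]
      nlinarith [mul_nonneg (sq_nonneg x) (sq_nonneg r)]
    · have := hf.integral_prod_left.re
      refine this.congr ?_
      filter_upwards [ae_restrict_mem measurableSet_Ioi] with r hr
      have hr' : (0:ℝ) < r := hr
      simp only [hH]
      refine (Complex.ofReal_re _).trans ?_
      refine integral_congr_ae (Filter.Eventually.of_forall fun x => ?_)
      simp only
      rw [Real.norm_eq_abs, abs_of_nonneg]
      exact mul_nonneg (Real.rpow_nonneg hr'.le _) (Real.exp_pos _).le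
  have hx : ∀ x : ℝ, x ≠ 0 → ∫ r in Set.Ioi (0:ℝ), r ^ (s - 1) * Real.exp (-(x^2/2) * r ^ (2:ℝ)) =
      2 ^ (s/2) * (1/2) * Real.Gamma (s/2) * |x| ^ (-s) := by
    intro x hx
    have hx' : 0 < |x| := abs_pos.mpr hx
    rw [integral_rpow_mul_exp_neg_mul_rpow two_pos (by linarith) (by positivity)]
    have : (x^2/2) ^ (-(s - 1 + 1)/2) = 2 ^ (s/2) * |x| ^ (-s) := by
      rw [show -(s - 1 + 1)/2 = -(s/2) by ring, Real.div_rpow (by positivity) (by norm_num),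
        ← sq_abs, ← Real.rpow_two, ← Real.rpow_mul hx'.le, Real.rpow_neg (by norm_num : (0:ℝ) ≤ 2),
        div_inv_eq_mul, show (2:ℝ) * -(s/2) = -s by ring, mul_comm]
    rw [this, show s - 1 + 1 = s by ring]
    ring
  have hK : 0 < 2 ^ (s/2) * (1/2) * Real.Gamma (s/2) := by
    have := Real.Gamma_pos_of_pos (show 0 < s/2 by linarith)
    positivity
  have hInt : Integrable (fun x => 2 ^ (s/2) * (1/2) * Real.Gamma (s/2) * |x| ^ (-s)) μ := by
    refine hg.integral_prod_right.congr ?_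
    filter_upwards [h0] with x hx0
    exact hx x hx0
  have hInt' : Integrable (fun x => |x| ^ (-s)) μ := by
    refine (hInt.const_mul (2 ^ (s/2) * (1/2) * Real.Gamma (s/2))⁻¹).congr ?_
    filter_upwards with x
    rw [← mul_assoc, inv_mul_cancel₀ hK.ne', one_mul]
  refine ⟨hInt', ?_⟩
  have E1 : ∫ x, (∫ r in Set.Ioi (0:ℝ), r ^ (s - 1) * Real.exp (-(x^2/2) * r ^ (2:ℝ))) ∂μ =
      2 ^ (s/2) * (1/2) * Real.Gamma (s/2) * ∫ x, |x| ^ (-s) ∂μ := by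
    rw [← integral_const_mul]
    apply integral_congr_ae
    filter_upwards [h0] with x hx0
    exact hx x hx0
  have E2 : ∫ r in Set.Ioi (0:ℝ), (∫ x, r ^ (s - 1) * Real.exp (-(x^2/2) * r ^ (2:ℝ)) ∂μ) =
      ∫ x, (∫ r in Set.Ioi (0:ℝ), r ^ (s - 1) * Real.exp (-(x^2/2) * r ^ (2:ℝ))) ∂μ :=
    integral_integral_swap hg
  have E3 : ∫ r in Set.Ioi (0:ℝ), (∫ z, ((r ^ (s - 1) : ℝ) : ℂ) * charFun μ (r * z) ∂(gaussianReal 0 1)) =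
      ∫ z, (∫ r in Set.Ioi (0:ℝ), ((r ^ (s - 1) : ℝ) : ℂ) * charFun μ (r * z)) ∂(gaussianReal 0 1) :=
    integral_integral_swap hf
  have E4 : (∫ z, (∫ r in Set.Ioi (0:ℝ), ((r ^ (s - 1) : ℝ) : ℂ) * charFun μ (r * z)) ∂(gaussianReal 0 1)).re =
      1 / α * Real.Gamma (s / α) * (w ^ (-((s / α : ℝ) : ℂ))).re *
        ∫ z, |z| ^ (-s) ∂(gaussianReal 0 1) := by
    have hi := hf.integral_prod_right
    have := integral_re hi
    change _ = Complex.re _ at this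
    rw [← integral_const_mul, ← this]
    apply integral_congr_ae
    filter_upwards [hγ0] with z hz
    exact (aux_r_integral hα hs hw hφ z hz).1
  simp only [hH] at E3
  rw [integral_complex_ofReal] at E3
  rw [← E3, Complex.ofReal_re, E2, E1, gV] at E4
  have hid := aux_gamma_identity hs hs1
  have hGα : Real.Gamma (1 + s/α) = s/α * Real.Gamma (s/α) := by
    rw [add_comm, Real.Gamma_add_one (by positivity)]
  have g2 : 0 < Real.Gamma (s/2) := Real.Gamma_pos_of_pos (by linarith)
  have hp0 : 0 < Real.sqrt Real.pi := by positivity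
  have h2s : (2:ℝ) ^ (-s) = 2 ^ (-(s/2)) * 2 ^ (-(s/2)) := by
    rw [← Real.rpow_add (by norm_num)]; congr 1; ring
  have h2n : (2:ℝ) ^ (s/2) * 2 ^ (-(s/2)) = 1 := by
    rw [← Real.rpow_add (by norm_num)]; simp
  have : Real.Gamma (1 + s / α) / Real.Gamma (1 + s) * (w ^ (-((s / α : ℝ) : ℂ))).re *
        (Real.cos (Real.pi/2 * s))⁻¹ = Real.Gamma (1 + s / α) * (w ^ (-((s / α : ℝ) : ℂ))).re *
        (1 / Real.Gamma (1 + s) * (Real.cos (Real.pi/2 * s))⁻¹) := by ring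
  rw [this, ← hid, hGα]
  apply mul_left_cancel₀ hK.ne'
  rw [E4, h2s]
  have h2pos : (2:ℝ) ^ (-(s/2)) ≠ 0 := by positivity
  have h2e : (2:ℝ) ^ (s/2) = (2 ^ (-(s/2)))⁻¹ := eq_inv_of_mul_eq_one_left h2n
  rw [h2e]
  field_simp

open Filter Topology in
lemma aux_nondeg (μ : Measure ℝ) [IsProbabilityMeasure μ] (h0 : ∀ᵐ x ∂μ, x ≠ 0)
    (hlog : ∀ p : ℕ, Integrable (fun x => |(Real.log |x|)| ^ p) μ)
    {α θ τ : ℝ} (hα : 0 < α) (hθ : α * |θ| < 1)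
    (hφ : ∀ k : ℝ, 0 < k → charFun μ k = Complex.exp (-Complex.exp
        ((α : ℂ) * (((Real.log |k| : ℝ) : ℂ) + (τ : ℂ) -
              Complex.I * ((Real.pi / 2 : ℝ) : ℂ) * (θ : ℂ) * ((Real.sign k : ℝ) : ℂ)) +
          ((Real.eulerMascheroniConstant : ℝ) : ℂ) * ((α : ℂ) - 1)))) :
    ∫ x, (Real.log |x|)^3 ∂μ =
      τ^3 + 3*τ*(Real.pi^2/4*(1-θ^2) + Real.pi^2/6*((α⁻¹)^2-1)) + 2*zetaR 3*((α⁻¹)^3-1) := by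
  set C := Real.eulerMascheroniConstant with hC
  set v : ℂ := (((α * τ + C * (α - 1) : ℝ)) : ℂ) + ((-(Real.pi/2 * (α * θ)) : ℝ) : ℂ) * Complex.I with hv
  have hvre : v.re = α * τ + C * (α - 1) := by simp [hv]
  have hvim : v.im = -(Real.pi/2 * (α * θ)) := by simp [hv]
  have habs : |α * θ| < 1 := by rwa [abs_mul, abs_of_pos hα]
  obtain ⟨hl, hr⟩ := abs_lt.mp habs
  have hpi := Real.pi_pos
  have hw : 0 < (Complex.exp v).re := by
    rw [Complex.exp_re, hvim, Real.cos_neg]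
    refine mul_pos (Real.exp_pos _) (Real.cos_pos_of_mem_Ioo ⟨?_, ?_⟩) <;> nlinarith
  have hφ' : ∀ k : ℝ, 0 < k →
      charFun μ k = Complex.exp (-(Complex.exp v * ((k ^ α : ℝ) : ℂ))) := by
    intro k hk
    rw [hφ k hk, Real.rpow_def_of_pos hk, Complex.ofReal_exp, ← Complex.exp_add, abs_of_pos hk,
      Real.sign_of_pos hk, hv]
    congr 3
    push_cast
    ring
  have hpow : ∀ s : ℝ, (Complex.exp v ^ (-((s / α : ℝ) : ℂ))).re =
      Real.exp (-(τ + C * (1 - α⁻¹)) * s) * Real.cos (Real.pi/2 * θ * s) := by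
    intro s
    rw [Complex.cpow_def_of_ne_zero (Complex.exp_ne_zero _),
      Complex.log_exp (by rw [hvim]; nlinarith) (by rw [hvim]; nlinarith), Complex.exp_re]
    have e1 : (v * (-((s / α : ℝ) : ℂ))).re = -(τ + C * (1 - α⁻¹)) * s := by
      rw [← Complex.ofReal_neg, Complex.re_mul_ofReal, hvre]
      field_simp
      try ring
    have e2 : (v * (-((s / α : ℝ) : ℂ))).im = Real.pi/2 * θ * s := by
      rw [← Complex.ofReal_neg, Complex.im_mul_ofReal, hvim]
      field_simp
    rw [e1, e2]
  have hm := fun s (hs : 0 < s) (hs1 : s < 1) => aux_moment μ h0 hα hs hs1 hw hφ'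
  have hlim := aux_diff_limit μ h0 hlog (fun s hs hs1 => (hm s hs hs1).1)
  have hexp : auxT (fun s => ∫ x, |x| ^ (-s) ∂μ) _ _ _ :=
    (aux_expansion (θ := θ) (τ := τ) (inv_pos.mpr hα)).congr (by
      filter_upwards [Ioo_mem_nhdsGT (show (0:ℝ) < 1 by norm_num)] with s hs
      rw [(hm s hs.1 hs.2).2, hpow, div_eq_inv_mul s α]
      ring) rfl rfl rfl
  have := tendsto_nhds_unique hlim hexp.third_diff
  linarith

lemma aux_deg (μ : Measure ℝ) [IsProbabilityMeasure μ]
    {θ τ : ℝ} (hθ : |θ| = 1)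
    (hφ : ∀ k : ℝ, k ≠ 0 → charFun μ k = Complex.exp (-Complex.exp
        ((1 : ℂ) * (((Real.log |k| : ℝ) : ℂ) + (τ : ℂ) -
              Complex.I * ((Real.pi / 2 : ℝ) : ℂ) * (θ : ℂ) * ((Real.sign k : ℝ) : ℂ)) +
          ((Real.eulerMascheroniConstant : ℝ) : ℂ) * ((1 : ℂ) - 1)))) :
    ∫ x, (Real.log |x|)^3 ∂μ = τ^3 := by
  have hmu : μ = Measure.dirac (θ * Real.exp τ) := by
    apply Measure.ext_of_charFun
    ext k
    rw [charFun_dirac]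
    by_cases hk : k = 0
    · simp [hk]
    rw [hφ k hk]
    have hexp : Complex.exp ((1 : ℂ) * (((Real.log |k| : ℝ) : ℂ) + (τ : ℂ) -
              Complex.I * ((Real.pi / 2 : ℝ) : ℂ) * (θ : ℂ) * ((Real.sign k : ℝ) : ℂ)) +
          ((Real.eulerMascheroniConstant : ℝ) : ℂ) * ((1 : ℂ) - 1)) =
        ((|k| * Real.exp τ : ℝ) : ℂ) * (-(((θ * Real.sign k : ℝ) : ℂ) * Complex.I)) := by
      have hs : θ * Real.sign k = 1 ∨ θ * Real.sign k = -1 := by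
        rcases Real.sign_apply_eq_of_ne_zero k hk with h | h <;> rw [h] <;>
          rcases (abs_eq zero_le_one).mp hθ with h' | h' <;> rw [h'] <;> norm_num
      have e : (1 : ℂ) * (((Real.log |k| : ℝ) : ℂ) + (τ : ℂ) -
              Complex.I * ((Real.pi / 2 : ℝ) : ℂ) * (θ : ℂ) * ((Real.sign k : ℝ) : ℂ)) +
          ((Real.eulerMascheroniConstant : ℝ) : ℂ) * ((1 : ℂ) - 1) =
          ((Real.log |k| : ℝ) : ℂ) + (τ : ℂ) + (-(((θ * Real.sign k : ℝ) : ℂ) * (Real.pi/2 * Complex.I))) := by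
        push_cast
        ring
      rw [e, Complex.exp_add, Complex.exp_add, ← Complex.ofReal_exp, ← Complex.ofReal_exp,
        Real.exp_log (abs_pos.mpr hk), ← Complex.ofReal_mul]
      congr 1
      rcases hs with h | h <;> rw [h]
      · simp [Complex.exp_neg, Complex.exp_pi_div_two_mul_I]
      · simp [Complex.exp_pi_div_two_mul_I]
    rw [hexp]
    have hk' : |k| * Real.sign k = k := by
      rcases lt_trichotomy k 0 with h | h | h
      · rw [abs_of_neg h, Real.sign_of_neg h]; ring
      · exact absurd h hk
      · rw [abs_of_pos h, Real.sign_of_pos h]; ring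
    have : inner ℝ (θ * Real.exp τ) k = |k| * Real.exp τ * (θ * Real.sign k) := by
      simp only [RCLike.inner_apply, conj_trivial]
      nth_rewrite 1 [← hk']
      ring
    rw [this]
    congr 1
    push_cast
    ring
  rw [hmu, integral_dirac, abs_mul, hθ, one_mul, Real.abs_exp, Real.log_exp]

theorem third_log_moment_of_strictlyStable {Ω : Type*} [MeasureSpace Ω]
    [IsProbabilityMeasure (ℙ : Measure Ω)] (X : Ω → ℝ) (ν θ τ : ℝ)
    (hX : IsStrictlyStable X ν θ τ)
    (DV : ℝ) (hDV : DV = Real.pi ^ 2 / 4 * (1 - θ ^ 2) + Real.pi ^ 2 / 6 * (ν - 1)) :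
    (∫ ω, (Real.log |X ω|) ^ 3) =
      τ ^ 3 + 3 * τ * DV + 2 * zetaR 3 * (ν ^ ((3 : ℝ) / 2) - 1) := by
  obtain ⟨hXm, hν, hθ, hX0, hlog, hφ⟩ := hX
  set α : ℝ := ν ^ (-(1/2) : ℝ) with hα
  have hν0 : 0 < ν := by linarith
  have hαpos : 0 < α := Real.rpow_pos_of_pos hν0 _
  have hαinv : α⁻¹ = Real.sqrt ν := by
    rw [hα, Real.rpow_neg hν0.le, inv_inv, Real.sqrt_eq_rpow]
  have hsq : Real.sqrt ν ^ 2 = ν := Real.sq_sqrt hν0.le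
  have hcube : ν ^ ((3 : ℝ) / 2) = Real.sqrt ν ^ 3 := by
    rw [Real.sqrt_eq_rpow, ← Real.rpow_natCast, ← Real.rpow_mul hν0.le]
    norm_num
  have hprob : IsProbabilityMeasure (Measure.map X (ℙ : Measure Ω)) :=
    Measure.isProbabilityMeasure_map hXm.aemeasurable
  have hmeas3 : Measurable (fun x : ℝ => (Real.log |x|) ^ 3) := by fun_prop
  have hint : (∫ ω, (Real.log |X ω|) ^ 3) = ∫ x, (Real.log |x|) ^ 3 ∂(Measure.map X (ℙ : Measure Ω)) :=
    (integral_map hXm.aemeasurable hmeas3.aestronglyMeasurable).symm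
  have h0 : ∀ᵐ x ∂(Measure.map X (ℙ : Measure Ω)), x ≠ 0 := by
    refine (ae_map_iff (p := fun x : ℝ => x ≠ 0) hXm.aemeasurable
      (measurableSet_singleton (0:ℝ)).compl).mpr ?_
    exact measure_eq_zero_iff_ae_notMem.mp hX0
  have hlog' : ∀ p : ℕ, Integrable (fun x => |(Real.log |x|)| ^ p) (Measure.map X (ℙ : Measure Ω)) := by
    intro p
    have hm : Measurable (fun x : ℝ => |(Real.log |x|)| ^ p) := by fun_prop
    exact (integrable_map_measure hm.aestronglyMeasurable hXm.aemeasurable).mpr (hlog p)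
  have hcf : ∀ k : ℝ, charFun (Measure.map X (ℙ : Measure Ω)) k =
      ∫ ω, Complex.exp (Complex.I * (k : ℂ) * (X ω : ℂ)) := by
    intro k
    have hm : Measurable (fun x : ℝ => Complex.exp (k * x * Complex.I)) := by fun_prop
    rw [charFun_apply_real, integral_map hXm.aemeasurable hm.aestronglyMeasurable]
    refine integral_congr_ae (Filter.Eventually.of_forall fun ω => ?_)
    simp only
    congr 1
    ring
  rw [hint, hDV, hcube]
  have hθ1 : |θ| ≤ 1 := hθ.trans (min_le_left _ _)
  have hθ2 : |θ| ≤ 2 * Real.sqrt ν - 1 := hθ.trans (min_le_right _ _)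
  have hs0 : 0 < Real.sqrt ν := Real.sqrt_pos.mpr hν0
  have hαs : α * Real.sqrt ν = 1 := by rw [← hαinv, mul_inv_cancel₀ hαpos.ne']
  by_cases hlt : |θ| < Real.sqrt ν
  · have := aux_nondeg (Measure.map X (ℙ : Measure Ω)) h0 hlog' (θ := θ) (τ := τ) hαpos
      (by rw [← hαs]; exact mul_lt_mul_of_pos_left hlt hαpos)
      (fun k hk => (hcf k).trans (hφ k hk.ne'))
    rw [this, hαinv, hsq]
  · push Not at hlt
    have hs1 : Real.sqrt ν = 1 := by linarith
    have hθe : |θ| = 1 := by linarith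
    have hα1 : α = 1 := by rwa [hs1, mul_one] at hαs
    have := aux_deg (Measure.map X (ℙ : Measure Ω)) (θ := θ) (τ := τ) hθe
      (fun k hk => by
        rw [hcf k, hφ k hk, hα1, Complex.ofReal_one])
    rw [this, hs1]
    have h1 : ν = 1 := by rw [← hsq, hs1]; norm_num
    have h2 : θ ^ 2 = 1 := by rw [← sq_abs, hθe]; norm_num
    rw [h1, h2]
    ring
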